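/- Let N ≥ 3 be an integer and define B_m = Σ_{α=1}^{N−1} η_α (η_α + 1)(η_α − 1)^{m−1} for integers m ≥ 0, where for m = 0 the factor (η_α − 1)^{−1} means 1/(η_α − 1) (well-defined since η_α ≠ 1 for 1 ≤ α ≤ N−1). Then B_0 = N − 2, B_1 = −2, B_m = 0 for every integer m with 2 ≤ m ≤ N−2, and B_{N−1} = N. -/

import Mathlib

open Finset

/-- The roots of unity `η_α = exp(2πiα/N)`. -/
noncomputable def η (N α : ℕ) : ℂ :=
  Complex.exp (2 * Real.pi * Complex.I * α / N)

/-- `B_m = Σ_{α=1}^{N−1} η_α (η_α + 1)(η_α − 1)^{m−1}`, where the exponent `m − 1`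
is taken in `ℤ`, so that for `m = 0` the factor is `1/(η_α − 1)`. -/
noncomputable def B (N m : ℕ) : ℂ :=
  ∑ α ∈ Finset.Icc 1 (N - 1), η N α * (η N α + 1) * (η N α - 1) ^ ((m : ℤ) - 1)

/-!
For a primitive `N`-th root of unity `ζ`, the sum of `ζ ^ (i * k)` over `i < N` is `N` if `N ∣ k`
and `0` otherwise, so a polynomial `p` of degree at most `N` sums to `N * (p₀ + p_N)` over the
`N`-th roots of unity. For `m ≥ 1` the summand of `B_m` is the value of the monic polynomial
`X (X + 1) (X - 1) ^ (m - 1)`, of degree `m + 1 ≤ N` and without constant term, and only the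
contribution of the root `1` has to be removed. For `m = 0` write
`x (x + 1) / (x - 1) = (x + 2) + 2 / (x - 1)` and pair `x` with `x⁻¹`, using
`1 / (x - 1) + 1 / (x⁻¹ - 1) = -1`.
-/

open Polynomial

section PowerSums

variable {R : Type*} [CommRing R] [IsDomain R] {ζ : R} {N : ℕ}

theorem sum_range_pow_pow_of_isPrimitiveRoot (hζ : IsPrimitiveRoot ζ N) (k : ℕ) :
    ∑ i ∈ range N, (ζ ^ i) ^ k = if N ∣ k then (N : R) else 0 := by
  simp_rw [pow_right_comm ζ _ k]
  split_ifs with hk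
  · simp [(hζ.pow_eq_one_iff_dvd k).2 hk]
  · have hne : ζ ^ k - 1 ≠ 0 := sub_ne_zero.2 fun h ↦ hk (hζ.dvd_of_pow_eq_one k h)
    refine (mul_eq_zero.1 ?_).resolve_right hne
    rw [geom_sum_mul, pow_right_comm, hζ.pow_eq_one, one_pow, sub_self]

theorem sum_range_eval_pow_of_isPrimitiveRoot (hζ : IsPrimitiveRoot ζ N) {p : R[X]}
    (hp : p.natDegree ≤ N) :
    ∑ i ∈ range N, p.eval (ζ ^ i) = N * (p.coeff 0 + p.coeff N) := by
  rcases N.eq_zero_or_pos with rfl | hN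
  · simp
  have low_terms : ∑ k ∈ range N, p.coeff k * (if N ∣ k then (N : R) else 0) = p.coeff 0 * N := by
    rw [sum_eq_single_of_mem 0 (mem_range.2 hN)]
    · simp
    · intro k hk hk0
      simp [Nat.not_dvd_of_pos_of_lt (Nat.pos_of_ne_zero hk0) (mem_range.1 hk)]
  calc ∑ i ∈ range N, p.eval (ζ ^ i)
      = ∑ k ∈ range (N + 1), p.coeff k * ∑ i ∈ range N, (ζ ^ i) ^ k := by
        simp_rw [eval_eq_sum_range' (Nat.lt_succ_of_le hp), mul_sum]
        exact sum_comm
    _ = N * (p.coeff 0 + p.coeff N) := by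
        simp_rw [sum_range_pow_pow_of_isPrimitiveRoot hζ]
        rw [sum_range_succ, low_terms, if_pos dvd_rfl]
        ring

theorem sum_Ico_one_eval_pow_of_isPrimitiveRoot (hζ : IsPrimitiveRoot ζ N) (hN : 0 < N) {p : R[X]}
    (hp : p.natDegree ≤ N) :
    ∑ i ∈ Ico 1 N, p.eval (ζ ^ i) = N * (p.coeff 0 + p.coeff N) - p.eval 1 := by
  rw [← sum_range_eval_pow_of_isPrimitiveRoot hζ hp, sum_range_eq_add_Ico _ hN, pow_zero,
    add_sub_cancel_left]

end PowerSums

section SummandPolynomial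

/-- The polynomial `X (X + 1) (X - 1) ^ n`, whose values at the roots of unity are the summands
of `B_{n + 1}`. -/
noncomputable def summandPolynomial (R : Type*) [CommRing R] (n : ℕ) : R[X] :=
  X * (X + C 1) * (X - C 1) ^ n

variable {R : Type*} [CommRing R]

theorem monic_summandPolynomial (n : ℕ) : (summandPolynomial R n).Monic :=
  (monic_X.mul (monic_X_add_C 1)).mul ((monic_X_sub_C 1).pow n)

theorem natDegree_summandPolynomial [Nontrivial R] (n : ℕ) :
    (summandPolynomial R n).natDegree = n + 2 := by
  rw [summandPolynomial, (monic_X.mul (monic_X_add_C 1)).natDegree_mul ((monic_X_sub_C 1).pow n),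
    monic_X.natDegree_mul (monic_X_add_C 1), (monic_X_sub_C 1).natDegree_pow,
    natDegree_X, natDegree_X_add_C, natDegree_X_sub_C]
  ring

theorem eval_summandPolynomial (n : ℕ) (x : R) :
    (summandPolynomial R n).eval x = x * (x + 1) * (x - 1) ^ n := by
  simp [summandPolynomial]

theorem coeff_summandPolynomial_zero (n : ℕ) : (summandPolynomial R n).coeff 0 = 0 := by
  simp [coeff_zero_eq_eval_zero, eval_summandPolynomial]

theorem coeff_summandPolynomial_of_le [Nontrivial R] {n k : ℕ} (hk : n + 2 ≤ k) :
    (summandPolynomial R n).coeff k = if n + 2 = k then 1 else 0 := by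
  rw [← natDegree_summandPolynomial (R := R)] at hk ⊢
  split_ifs with h
  · exact h ▸ monic_summandPolynomial n
  · exact coeff_eq_zero_of_natDegree_lt (hk.lt_of_ne h)

end SummandPolynomial

section PrimitiveRootSum

variable {K : Type*} [Field K] {ζ : K} {N : ℕ}

/-- The analogue of `B N m` for the powers `ζ ^ α` of an element `ζ` of a field, meant for `ζ` a
primitive `N`-th root of unity. -/
def primitiveRootSum (ζ : K) (N m : ℕ) : K :=
  ∑ α ∈ Ico 1 N, ζ ^ α * (ζ ^ α + 1) * (ζ ^ α - 1) ^ ((m : ℤ) - 1)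

theorem pow_ne_one_of_mem_Ico_one (hζ : IsPrimitiveRoot ζ N) {α : ℕ} (hα : α ∈ Ico 1 N) :
    ζ ^ α ≠ 1 := by
  rw [mem_Ico] at hα
  exact hζ.pow_ne_one_of_pos_of_lt (by lia) hα.2

theorem inv_sub_one_add_inv_inv_sub_one {x : K} (hx₀ : x ≠ 0) (hx₁ : x ≠ 1) :
    (x - 1)⁻¹ + (x⁻¹ - 1)⁻¹ = -1 := by
  have hsub : x - 1 ≠ 0 := sub_ne_zero.2 hx₁
  have hinv : x⁻¹ - 1 = -(x - 1) / x := by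
    field_simp
    ring
  rw [hinv]
  field_simp
  ring

theorem two_mul_sum_inv_pow_sub_one (hζ : IsPrimitiveRoot ζ N) (hN : 0 < N) :
    2 * ∑ α ∈ Ico 1 N, (ζ ^ α - 1)⁻¹ = 1 - N := by
  have hζ₀ : ζ ≠ 0 := hζ.ne_zero hN.ne'
  have reflect : ∑ α ∈ Ico 1 N, ((ζ ^ α)⁻¹ - 1)⁻¹ = ∑ α ∈ Ico 1 N, (ζ ^ α - 1)⁻¹ := by
    have h := sum_Ico_reflect (fun α ↦ (ζ ^ α - 1)⁻¹) 1 N.le_succ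
    rw [Nat.add_sub_cancel_left, Nat.add_sub_cancel] at h
    rw [← h]
    refine sum_congr rfl fun α hα ↦ ?_
    rw [pow_sub₀ ζ hζ₀ (mem_Ico.1 hα).2.le, hζ.pow_eq_one, one_mul]
  calc 2 * ∑ α ∈ Ico 1 N, (ζ ^ α - 1)⁻¹
      = ∑ α ∈ Ico 1 N, ((ζ ^ α - 1)⁻¹ + ((ζ ^ α)⁻¹ - 1)⁻¹) := by
        rw [sum_add_distrib, reflect, two_mul]
    _ = ∑ _α ∈ Ico 1 N, (-1 : K) := sum_congr rfl fun α hα ↦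
        inv_sub_one_add_inv_inv_sub_one (pow_ne_zero α hζ₀) (pow_ne_one_of_mem_Ico_one hζ hα)
    _ = 1 - N := by
        rw [sum_const, Nat.card_Ico, nsmul_eq_mul, Nat.cast_sub hN]
        ring

theorem primitiveRootSum_zero (hζ : IsPrimitiveRoot ζ N) (hN : 2 ≤ N) :
    primitiveRootSum ζ N 0 = N - 2 := by
  have linear_part : ∑ α ∈ Ico 1 N, (ζ ^ α + 2) = 2 * N - 3 := by
    have h := sum_Ico_one_eval_pow_of_isPrimitiveRoot hζ (by lia) (p := X + C 2)
      (by rw [natDegree_X_add_C]; lia)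
    simp only [eval_add, eval_X, eval_C, coeff_add, coeff_X_zero, coeff_C_zero,
      coeff_X_of_ne_one (show N ≠ 1 by lia), coeff_C_of_ne_zero (show N ≠ 0 by lia)] at h
    linear_combination h
  calc primitiveRootSum ζ N 0
      = ∑ α ∈ Ico 1 N, ((ζ ^ α + 2) + 2 * (ζ ^ α - 1)⁻¹) := by
        refine sum_congr rfl fun α hα ↦ ?_
        have hsub : ζ ^ α - 1 ≠ 0 := sub_ne_zero.2 (pow_ne_one_of_mem_Ico_one hζ hα)
        rw [Nat.cast_zero, zero_sub, zpow_neg_one]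
        field_simp
        ring
    _ = (2 * N - 3) + (1 - N) := by
        rw [sum_add_distrib, ← mul_sum, linear_part, two_mul_sum_inv_pow_sub_one hζ (by lia)]
    _ = N - 2 := by ring

theorem primitiveRootSum_succ (hζ : IsPrimitiveRoot ζ N) {n : ℕ} (hn : n + 2 ≤ N) :
    primitiveRootSum ζ N (n + 1) = (if n + 2 = N then (N : K) else 0) - 2 * 0 ^ n := by
  calc primitiveRootSum ζ N (n + 1)
      = ∑ α ∈ Ico 1 N, (summandPolynomial K n).eval (ζ ^ α) := by
        simp only [primitiveRootSum, eval_summandPolynomial, Nat.cast_succ, add_sub_cancel_right,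
          zpow_natCast]
    _ = N * (0 + if n + 2 = N then 1 else 0) - 1 * (1 + 1) * (1 - 1) ^ n := by
        rw [sum_Ico_one_eval_pow_of_isPrimitiveRoot hζ (by lia)
          ((natDegree_summandPolynomial n).trans_le hn), coeff_summandPolynomial_zero,
          coeff_summandPolynomial_of_le hn, eval_summandPolynomial]
    _ = (if n + 2 = N then (N : K) else 0) - 2 * 0 ^ n := by
        rw [zero_add, mul_ite, mul_one, mul_zero, one_mul, one_add_one_eq_two, sub_self]

theorem stmt15_general (hζ : IsPrimitiveRoot ζ N) (hN : 3 ≤ N) :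
    primitiveRootSum ζ N 0 = N - 2 ∧ primitiveRootSum ζ N 1 = -2 ∧
      (∀ m : ℕ, 2 ≤ m → m ≤ N - 2 → primitiveRootSum ζ N m = 0) ∧
      primitiveRootSum ζ N (N - 1) = N := by
  refine ⟨primitiveRootSum_zero hζ (by lia), ?_, fun m hm₂ hmN ↦ ?_, ?_⟩
  · simp [primitiveRootSum_succ hζ (n := 0) (by lia), show 2 ≠ N by lia]
  · obtain ⟨n, rfl⟩ := Nat.exists_eq_add_of_le' hm₂
    simp [primitiveRootSum_succ hζ (n := n + 1) (by lia), show n + 1 + 2 ≠ N by lia]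
  · obtain ⟨n, rfl⟩ := Nat.exists_eq_add_of_le' hN
    simp [primitiveRootSum_succ hζ (n := n + 1) le_rfl]

end PrimitiveRootSum

theorem eta_eq_pow (N α : ℕ) : η N α = η N 1 ^ α := by
  rw [η, η, ← Complex.exp_nat_mul]
  congr 1
  push_cast
  ring

theorem isPrimitiveRoot_eta_one {N : ℕ} (hN : N ≠ 0) : IsPrimitiveRoot (η N 1) N := by
  simpa only [η, Nat.cast_one, mul_one] using Complex.isPrimitiveRoot_exp N hN

theorem B_eq_primitiveRootSum (N m : ℕ) : B N m = primitiveRootSum (η N 1) N m := by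
  have index_set : Icc 1 (N - 1) = Ico 1 N := by
    ext α
    simp only [mem_Icc, mem_Ico]
    lia
  simp only [B, primitiveRootSum, index_set, ← eta_eq_pow]

theorem stmt15 (N : ℕ) (hN : 3 ≤ N) :
    B N 0 = (N : ℂ) - 2 ∧ B N 1 = -2 ∧
      (∀ m : ℕ, 2 ≤ m → m ≤ N - 2 → B N m = 0) ∧ B N (N - 1) = (N : ℂ) := by
  simpa only [B_eq_primitiveRootSum] using stmt15_general (isPrimitiveRoot_eta_one (by lia)) hN
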